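/- For h ≥ 1 let n = 2^{h+1} − 1 and let x_h be the sequence of length n defined by x_h[i] = (h − v₂(i))·(n+1) + i, where v₂(i) is the 2-adic valuation of i; the Cartesian tree of x_h is the complete binary tree of height h. Then |NG(x_h)| = 6(2^h − 1) − 2h. -/

import Mathlib

/-- A sequence of length `n`: a function `ℕ → ℤ` injective on positions `1,…,n`. -/
def IsSeq (n : ℕ) (x : ℕ → ℤ) : Prop := Set.InjOn x (Set.Icc 1 n)

/-- Parent-distance table: `fwdPD x i = i - max{ j | 1 ≤ j < i, x j < x i }` if such `j`
exists, `0` otherwise. -/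
def fwdPD (x : ℕ → ℤ) (i : ℕ) : ℕ :=
  if h : ((Finset.Ico 1 i).filter (fun j => x j < x i)).Nonempty then
    i - ((Finset.Ico 1 i).filter (fun j => x j < x i)).max' h
  else 0

/-- Reverse parent-distance table: `revPD n x i = min{ j | i < j ≤ n, x j < x i } - i` if
such `j` exists, `0` otherwise. -/
def revPD (n : ℕ) (x : ℕ → ℤ) (i : ℕ) : ℕ :=
  if h : ((Finset.Ioc i n).filter (fun j => x j < x i)).Nonempty then
    ((Finset.Ioc i n).filter (fun j => x j < x i)).min' h - i
  else 0

/-- The swap `τ(x,i)`: exchanges positions `i` and `i+1`. -/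
def swapSeq (x : ℕ → ℤ) (i : ℕ) : ℕ → ℤ :=
  fun j => if j = i then x (i + 1) else if j = i + 1 then x i else x j

/-- The parent-distance table of a sequence of length `n`, as a function on `Fin n`
(position `k : Fin n` corresponds to index `k+1 ∈ {1,…,n}`). -/
def PDvec (n : ℕ) (x : ℕ → ℤ) : Fin n → ℕ := fun k => fwdPD x (k.1 + 1)

/-- `NGat n x i` is the set of parent-distance tables obtained by a swap at position `i`
(`1 ≤ i ≤ n-1`) from some sequence `z` having the same Cartesian tree (i.e. the same
parent-distance table) as `x`; it is empty for `i` out of range. -/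
def NGat (n : ℕ) (x : ℕ → ℤ) (i : ℕ) : Set (Fin n → ℕ) :=
  {P | 1 ≤ i ∧ i + 1 ≤ n ∧
    ∃ z, IsSeq n z ∧ PDvec n z = PDvec n x ∧ P = PDvec n (swapSeq z i)}

/-- The neighborhood of (the Cartesian tree of) `x` in the swap graph. -/
def NG (n : ℕ) (x : ℕ → ℤ) : Set (Fin n → ℕ) := ⋃ i, NGat n x i

/-- A sequence of length `2^(h+1) - 1` whose Cartesian tree is the complete binary tree
of height `h`: `x_h[i] = (h - v₂(i)) * 2^(h+1) + i`, where `v₂` is the 2-adic valuation. -/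
def compSeq (h : ℕ) : ℕ → ℤ :=
  fun i => ((h - padicValNat 2 i : ℕ) : ℤ) * (2 ^ (h + 1) : ℕ) + (i : ℤ)

/-! ### The lowest set bit -/

/-- The largest power of two dividing `m`. -/
def lowbit (m : ℕ) : ℕ := 2 ^ padicValNat 2 m

theorem exists_eq_two_pow_mul_odd {m : ℕ} (hm : 0 < m) : ∃ k c, m = 2 ^ k * (2 * c + 1) := by
  obtain ⟨k, c, hc, rfl⟩ := Nat.exists_eq_two_pow_mul_odd hm.ne'
  obtain ⟨d, rfl⟩ := hc
  exact ⟨k, d, rfl⟩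

theorem padicValNat_two_pow_mul_odd (k c : ℕ) : padicValNat 2 (2 ^ k * (2 * c + 1)) = k := by
  rw [padicValNat.mul (by positivity) (by omega), padicValNat.prime_pow,
    padicValNat.eq_zero_of_not_dvd (by omega), add_zero]

theorem lowbit_two_pow_mul_odd (k c : ℕ) : lowbit (2 ^ k * (2 * c + 1)) = 2 ^ k := by
  rw [lowbit, padicValNat_two_pow_mul_odd]

theorem lowbit_two_pow (k : ℕ) : lowbit (2 ^ k) = 2 ^ k := by
  simpa using lowbit_two_pow_mul_odd k 0

theorem lowbit_pos (m : ℕ) : 0 < lowbit m := by unfold lowbit; positivity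

theorem lowbit_le {m : ℕ} (hm : 0 < m) : lowbit m ≤ m :=
  Nat.le_of_dvd hm pow_padicValNat_dvd

theorem lowbit_odd {m : ℕ} (hm : m % 2 = 1) : lowbit m = 1 := by
  rw [lowbit, padicValNat.eq_zero_of_not_dvd (by omega), pow_zero]

theorem lowbit_even {m : ℕ} (hm : 0 < m) (he : m % 2 = 0) : lowbit m % 2 = 0 := by
  have h1 : 1 ≤ padicValNat 2 m := one_le_padicValNat_of_dvd hm.ne' (by omega)
  obtain ⟨k, hk⟩ := Nat.exists_eq_add_of_le h1
  rw [lowbit, hk, pow_add]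
  omega

theorem lowbit_add {m r : ℕ} (hm : 0 < m) (hr : 0 < r) (hrm : r < lowbit m) :
    lowbit (m + r) = lowbit r := by
  obtain ⟨k, c, rfl⟩ := exists_eq_two_pow_mul_odd hm
  obtain ⟨i, d, rfl⟩ := exists_eq_two_pow_mul_odd hr
  rw [lowbit_two_pow_mul_odd] at hrm ⊢
  have hik : 2 ^ i < 2 ^ k := lt_of_le_of_lt (Nat.le_mul_of_pos_right _ (by omega)) hrm
  rw [Nat.pow_lt_pow_iff_right (by norm_num)] at hik
  obtain ⟨e, rfl⟩ := Nat.exists_eq_add_of_lt hik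
  have : 2 ^ (i + e + 1) * (2 * c + 1) + 2 ^ i * (2 * d + 1) =
      2 ^ i * (2 * (2 ^ e * (2 * c + 1) + d) + 1) := by ring
  rw [this, lowbit_two_pow_mul_odd]

theorem lowbit_sub {m r : ℕ} (hm : 0 < m) (hr : 0 < r) (hrm : r < lowbit m) :
    lowbit (m - r) = lowbit r := by
  obtain ⟨k, c, rfl⟩ := exists_eq_two_pow_mul_odd hm
  obtain ⟨i, d, rfl⟩ := exists_eq_two_pow_mul_odd hr
  rw [lowbit_two_pow_mul_odd] at hrm ⊢
  have hik : 2 ^ i < 2 ^ k := lt_of_le_of_lt (Nat.le_mul_of_pos_right _ (by omega)) hrm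
  rw [Nat.pow_lt_pow_iff_right (by norm_num)] at hik
  obtain ⟨e, rfl⟩ := Nat.exists_eq_add_of_lt hik
  have h1 : 2 * d + 1 < 2 * 2 ^ e := by
    have : 2 ^ (i + e + 1) = 2 ^ i * (2 * 2 ^ e) := by ring
    rw [this] at hrm
    exact Nat.lt_of_mul_lt_mul_left hrm
  obtain ⟨f, hf⟩ := Nat.exists_eq_add_of_lt (show d < 2 ^ e by omega)
  have : 2 ^ (i + e + 1) * (2 * c + 1) - 2 ^ i * (2 * d + 1) =
      2 ^ i * (2 * (2 * 2 ^ e * c + f) + 1) := by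
    have h2 : 2 ^ (i + e + 1) = 2 ^ i * (2 * 2 ^ e) := by ring
    rw [h2, hf]
    apply Nat.sub_eq_of_eq_add
    ring
  rw [this, lowbit_two_pow_mul_odd]

theorem two_mul_lowbit_le {m : ℕ} (hm : 0 < m) (hne : m ≠ lowbit m) :
    2 * lowbit m ≤ lowbit (m - lowbit m) := by
  obtain ⟨k, c, rfl⟩ := exists_eq_two_pow_mul_odd hm
  rw [lowbit_two_pow_mul_odd] at hne ⊢
  have hc : 0 < c := by
    rcases Nat.eq_zero_or_pos c with rfl | hc
    · simp at hne
    · exact hc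
  obtain ⟨i, d, rfl⟩ := exists_eq_two_pow_mul_odd hc
  have : 2 ^ k * (2 * (2 ^ i * (2 * d + 1)) + 1) - 2 ^ k = 2 ^ (k + 1 + i) * (2 * d + 1) := by
    apply Nat.sub_eq_of_eq_add
    ring
  rw [this, lowbit_two_pow_mul_odd, pow_add, pow_succ]
  have := Nat.le_mul_of_pos_right (2 ^ k * 2) (show 0 < 2 ^ i by positivity)
  linarith

theorem add_lowbit_le {m N : ℕ} (hm : 0 < m) (hmN : m < 2 ^ N) : m + lowbit m ≤ 2 ^ N := by
  obtain ⟨k, c, rfl⟩ := exists_eq_two_pow_mul_odd hm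
  rw [lowbit_two_pow_mul_odd]
  have hk : 2 ^ k < 2 ^ N := lt_of_le_of_lt (Nat.le_mul_of_pos_right _ (by omega)) hmN
  rw [Nat.pow_lt_pow_iff_right (by norm_num)] at hk
  obtain ⟨e, rfl⟩ := Nat.exists_eq_add_of_lt hk
  have h2 : 2 ^ (k + e + 1) = 2 ^ k * (2 * 2 ^ e) := by ring
  rw [h2] at hmN ⊢
  have h1 := Nat.lt_of_mul_lt_mul_left hmN
  have h3 : 2 ^ k * (2 * c + 1) + 2 ^ k = 2 ^ k * (2 * c + 2) := by ring
  rw [h3]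
  exact Nat.mul_le_mul_left _ (by omega)

/-- A position strictly inside the subtree interval of `m` has a smaller lowest bit. -/
theorem lowbit_lt_of_mem {m l : ℕ} (hm : 0 < m) (hne : l ≠ m) (h1 : m < l + lowbit m)
    (h2 : l < m + lowbit m) : lowbit l < lowbit m := by
  rcases lt_or_gt_of_ne hne with hl | hl
  · have h := lowbit_sub hm (r := m - l) (by omega) (by omega)
    rw [show m - (m - l) = l by omega] at h
    have := lowbit_le (m := m - l) (by omega)
    omega
  · have h := lowbit_add hm (r := l - m) (by omega) (by omega)
    rw [show m + (l - m) = l by omega] at h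
    have := lowbit_le (m := l - m) (by omega)
    omega

theorem le_sub_lowbit {m l : ℕ} (hm : 0 < m) (hl : m < l) (h2 : l < m + lowbit m) :
    m + lowbit l ≤ l := by
  have h := lowbit_add hm (r := l - m) (by omega) (by omega)
  rw [show m + (l - m) = l by omega] at h
  have := lowbit_le (m := l - m) (by omega)
  omega

theorem lowbit_add_two_pow {p i : ℕ} (hp : 0 < p) (hi : i < padicValNat 2 p) :
    lowbit (p + 2 ^ i) = 2 ^ i := by
  rw [lowbit_add hp (by positivity), lowbit_two_pow]
  exact Nat.pow_lt_pow_right (by norm_num) hi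

theorem lowbit_sub_two_pow {p i : ℕ} (hp : 0 < p) (hi : i < padicValNat 2 p) :
    lowbit (p - 2 ^ i) = 2 ^ i := by
  rw [lowbit_sub hp (by positivity), lowbit_two_pow]
  exact Nat.pow_lt_pow_right (by norm_num) hi

/-! ### Parent-distance tables -/

theorem fwdPD_eq_zero {x : ℕ → ℤ} {i : ℕ} (h : ∀ j, 1 ≤ j → j < i → x i ≤ x j) :
    fwdPD x i = 0 := by
  rw [fwdPD, dif_neg]
  rintro ⟨j, hj⟩
  simp only [Finset.mem_filter, Finset.mem_Ico] at hj
  exact absurd (h j hj.1.1 hj.1.2) (not_le.2 hj.2)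

theorem fwdPD_eq {x : ℕ → ℤ} {i k d : ℕ} (hk : 1 ≤ k) (hki : k + d = i) (hd : 0 < d)
    (hx : x k < x i) (h : ∀ j, k < j → j < i → x i ≤ x j) : fwdPD x i = d := by
  have hmem : k ∈ (Finset.Ico 1 i).filter (fun j => x j < x i) := by
    simp only [Finset.mem_filter, Finset.mem_Ico]
    exact ⟨⟨hk, by omega⟩, hx⟩
  rw [fwdPD, dif_pos ⟨k, hmem⟩]
  have : ((Finset.Ico 1 i).filter (fun j => x j < x i)).max' ⟨k, hmem⟩ = k := by
    apply le_antisymm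
    · apply Finset.max'_le
      intro j hj
      simp only [Finset.mem_filter, Finset.mem_Ico] at hj
      by_contra hlt
      exact absurd (h j (by omega) hj.1.2) (not_le.2 hj.2)
    · exact Finset.le_max' _ _ hmem
  rw [this]
  omega

theorem fwdPD_spec (x : ℕ → ℤ) (i : ℕ) :
    (fwdPD x i = 0 ∧ ∀ j, 1 ≤ j → j < i → x i ≤ x j) ∨
    (0 < fwdPD x i ∧ fwdPD x i < i ∧ x (i - fwdPD x i) < x i ∧
      ∀ j, i - fwdPD x i < j → j < i → x i ≤ x j) := by
  by_cases hex : ((Finset.Ico 1 i).filter (fun j => x j < x i)).Nonempty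
  · right
    obtain ⟨k, hk⟩ : ∃ k, ((Finset.Ico 1 i).filter (fun j => x j < x i)).max' hex = k := ⟨_, rfl⟩
    have hmem := Finset.max'_mem _ hex
    have hmax := Finset.le_max' ((Finset.Ico 1 i).filter (fun j => x j < x i))
    rw [hk] at hmem
    simp only [hk] at hmax
    simp only [Finset.mem_filter, Finset.mem_Ico] at hmem hmax
    have hf : fwdPD x i = i - k := by rw [fwdPD, dif_pos hex, hk]
    rw [hf, show i - (i - k) = k by omega]
    refine ⟨by omega, by omega, hmem.2, fun j hj hji => ?_⟩
    by_contra hlt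
    have := hmax j ⟨⟨by omega, hji⟩, by omega⟩
    omega
  · left
    refine ⟨by rw [fwdPD, dif_neg hex], fun j hj hji => ?_⟩
    by_contra hlt
    exact hex ⟨j, by simp only [Finset.mem_filter, Finset.mem_Ico]; exact ⟨⟨hj, hji⟩, by omega⟩⟩

/-- The parent-distance table of the complete binary tree. -/
def completeTable (m : ℕ) : ℕ := if m = lowbit m then 0 else lowbit m

/-- `z` is heap-ordered along the complete binary tree on positions `1,…,n`: it is minimal at `m`
on the subtree interval of `m`. -/
def IsCompleteHeap (n : ℕ) (z : ℕ → ℤ) : Prop :=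
  ∀ m l, 1 ≤ m → m ≤ n → 1 ≤ l → l ≤ n → l ≠ m → m < l + lowbit m → l < m + lowbit m → z m < z l

theorem IsCompleteHeap.lt_sub_lowbit {n : ℕ} {z : ℕ → ℤ} (H : IsCompleteHeap n z) {m : ℕ}
    (hm : 1 ≤ m) (hmn : m ≤ n) (hne : m ≠ lowbit m) : z (m - lowbit m) < z m := by
  have h1 := two_mul_lowbit_le hm hne
  have h2 := lowbit_le hm
  have h3 := lowbit_pos m
  exact H _ _ (by omega) (by omega) hm hmn (by omega) (by omega) (by omega)

theorem IsCompleteHeap.fwdPD_eq {n : ℕ} {z : ℕ → ℤ} (H : IsCompleteHeap n z) {m : ℕ}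
    (hm : 1 ≤ m) (hmn : m ≤ n) : fwdPD z m = completeTable m := by
  have h2 := lowbit_le hm
  have h3 := lowbit_pos m
  unfold completeTable
  split_ifs with he
  · exact fwdPD_eq_zero fun j hj hjm =>
      (H m j hm hmn hj (by omega) (by omega) (by omega) (by omega)).le
  · exact _root_.fwdPD_eq (k := m - lowbit m) (by omega) (by omega) h3 (H.lt_sub_lowbit hm hmn he)
      fun j hj hjm => (H m j hm hmn (by omega) (by omega) (by omega) (by omega) (by omega)).le

theorem isCompleteHeap_of_fwdPD {n : ℕ} {z : ℕ → ℤ} (hz : IsSeq n z)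
    (h : ∀ m, 1 ≤ m → m ≤ n → fwdPD z m = completeTable m) : IsCompleteHeap n z := by
  have key : ∀ m, 1 ≤ m → m ≤ n → (m ≠ lowbit m → z (m - lowbit m) < z m) ∧
      ∀ l, 1 ≤ l → l < m → m < l + lowbit m → z m < z l := by
    intro m hm hmn
    have h1 := h m hm hmn
    have h2 := lowbit_le hm
    have h3 := lowbit_pos m
    have hle : ∀ l, 1 ≤ l → l < m → z m ≤ z l → z m < z l := fun l hl hlm hzl =>
      lt_of_le_of_ne hzl fun he => by
        have := hz ⟨hm, hmn⟩ ⟨hl, by omega⟩ he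
        omega
    unfold completeTable at h1
    rcases fwdPD_spec z m with ⟨h0, hs⟩ | ⟨h0, -, hlt, hs⟩
    · split_ifs at h1 with he
      · exact ⟨fun hne => absurd he hne, fun l hl hlm _ => hle l hl hlm (hs l hl hlm)⟩
      · omega
    · split_ifs at h1 with he
      · omega
      · rw [h1] at hlt hs
        exact ⟨fun _ => hlt, fun l hl hlm hml => hle l hl hlm (hs l (by omega) hlm)⟩
  intro m l hm hmn hl hln hne h1 h2
  rcases lt_or_gt_of_ne hne with hlm | hlm
  · exact (key m hm hmn).2 l hl hlm h1
  · clear h1 hne hl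
    induction l using Nat.strong_induction_on with
    | _ l ih =>
      have h3 := le_sub_lowbit hm hlm h2
      have h4 := lowbit_pos l
      have h5 := (key l (by omega) hln).1 (by omega)
      rcases eq_or_lt_of_le h3 with h6 | h6
      · rwa [show l - lowbit l = m by omega] at h5
      · exact (ih (l - lowbit l) (by omega) (by omega) (by omega) (by omega)).trans h5

/-! ### The tables produced by one swap -/

/-- The table after swapping the even position `p` with the leaf `p + 1`, where the leaf's value
falls below `2 ^ i` steps back exactly for `i < j`. -/
def rightTable (p j m : ℕ) : ℕ :=
  if m = p then (if p = 2 ^ j then 0 else 2 ^ j)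
  else if m = p + 1 then (if p = lowbit p then 0 else lowbit p + 1)
  else if m = p + lowbit m then lowbit m - 1
  else completeTable m

/-- The table after swapping the leaf `p - 1` with the even position `p`, where the leaf's value
is below that of `p + 2 ^ i` exactly for `i < j`. -/
def leftTable (p j m : ℕ) : ℕ :=
  if m + 1 = p then completeTable p - 1
  else if m = p then 1
  else if m = p + lowbit m ∧ 2 ^ j ≤ lowbit m then lowbit m + 1
  else completeTable m

theorem IsCompleteHeap.fwdPD_swap_right {n p j : ℕ} {z : ℕ → ℤ} (H : IsCompleteHeap n z)
    (hp : 1 ≤ p) (hpn : p + 1 ≤ n) (he : p % 2 = 0) (hj : j ≤ padicValNat 2 p)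
    (hlt : ∀ i < j, z (p + 1) < z (p - 2 ^ i))
    (hgt : j = padicValNat 2 p ∨ z (p - 2 ^ j) < z (p + 1)) {m : ℕ} (hm : 1 ≤ m) (hmn : m ≤ n) :
    fwdPD (swapSeq z p) m = rightTable p j m := by
  have hbp := lowbit_pos p
  have hbp' := lowbit_le hp
  have hbe := lowbit_even hp he
  have hb1 : lowbit (p + 1) = 1 := lowbit_odd (by omega)
  have hbm := lowbit_pos m
  have hbm' := lowbit_le hm
  have hpp : z p < z (p + 1) := H _ _ hp (by omega) (by omega) hpn (by omega) (by omega) (by omega)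
  have y0 : swapSeq z p p = z (p + 1) := by simp [swapSeq]
  have y1 : swapSeq z p (p + 1) = z p := by simp [swapSeq]
  have y2 : ∀ l, l ≠ p → l ≠ p + 1 → swapSeq z p l = z l := fun l h1 h2 => by
    simp [swapSeq, h1, h2]
  have hjp : 2 ^ j ≤ lowbit p := Nat.pow_le_pow_right (by norm_num) hj
  have hjpos : 0 < 2 ^ j := by positivity
  have hclose : ∀ l, 1 ≤ l → l < p → p < l + 2 ^ j → z (p + 1) < z l := by
    intro l hl hlp hl2
    have e1 : 2 ^ Nat.log 2 (p - l) ≤ p - l := Nat.pow_log_le_self 2 (by omega)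
    have e2 : p - l < 2 ^ (Nat.log 2 (p - l) + 1) := Nat.lt_pow_succ_log_self (by norm_num) _
    have e3 : 2 ^ Nat.log 2 (p - l) < 2 ^ j := by omega
    rw [Nat.pow_lt_pow_iff_right (by norm_num)] at e3
    have e4 := hlt _ e3
    have e5 := lowbit_sub_two_pow hp (lt_of_lt_of_le e3 hj)
    rw [pow_succ] at e2
    rcases eq_or_ne l (p - 2 ^ Nat.log 2 (p - l)) with e6 | e6
    · rwa [← e6] at e4
    · exact e4.trans (H _ _ (by omega) (by omega) hl (by omega) e6 (by omega) (by omega))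
  unfold rightTable
  split_ifs with c1 c2 c3 c4 c5
  · subst c1
    refine fwdPD_eq_zero fun l hl hlm => ?_
    rw [y0, y2 l (by omega) (by omega)]
    exact (hclose l hl hlm (by omega)).le
  · subst c1
    have hlow : z (m - 2 ^ j) < z (m + 1) := by
      rcases hgt with hgt | hgt
      · have hbj : lowbit m = 2 ^ j := by rw [hgt, lowbit]
        have := H.lt_sub_lowbit hm hmn (by omega)
        rw [hbj] at this
        exact this.trans hpp
      · exact hgt
    refine _root_.fwdPD_eq (k := m - 2 ^ j) (by omega) (by omega) hjpos ?_ fun l hl hlm => ?_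
    · rwa [y0, y2 _ (by omega) (by omega)]
    · rw [y0, y2 l (by omega) (by omega)]
      exact (hclose l (by omega) hlm (by omega)).le
  · subst c3
    refine fwdPD_eq_zero fun l hl hlm => ?_
    rw [y1]
    rcases eq_or_ne l p with rfl | hlp
    · rw [y0]; exact hpp.le
    · rw [y2 l hlp (by omega)]
      exact (H p l hp (by omega) hl (by omega) hlp (by omega) (by omega)).le
  · subst c3
    refine _root_.fwdPD_eq (k := p - lowbit p) (by omega) (by omega) (by omega) ?_
      fun l hl hlm => ?_
    · rw [y1, y2 _ (by omega) (by omega)]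
      exact H.lt_sub_lowbit hp (by omega) c4
    · rw [y1]
      rcases eq_or_ne l p with rfl | hlp
      · rw [y0]; exact hpp.le
      · rw [y2 l hlp (by omega)]
        exact (H p l hp (by omega) (by omega) (by omega) hlp (by omega) (by omega)).le
  · have hlow := H.lt_sub_lowbit hm hmn (by omega)
    rw [show m - lowbit m = p by omega] at hlow
    refine _root_.fwdPD_eq (k := p + 1) (by omega) (by omega) (by omega) ?_ fun l hl hlm => ?_
    · rwa [y1, y2 _ c1 c3]
    · rw [y2 l (by omega) (by omega), y2 m c1 c3]
      exact (H m l hm hmn (by omega) (by omega) (by omega) (by omega) (by omega)).le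
  · have hin : ∀ l, 1 ≤ l → l < m → m < l + lowbit m → swapSeq z p m ≤ swapSeq z p l := by
      intro l hl hlm hml
      have hzl := H m l hm hmn hl (by omega) (by omega) hml (by omega)
      rw [y2 m c1 c3]
      rcases eq_or_ne l p with rfl | hlp
      · rw [y0]; exact (hzl.trans hpp).le
      · rcases eq_or_ne l (p + 1) with rfl | hlp1
        · have hodd : m - lowbit m ≠ p := by omega
          rw [y1]
          exact (H m p hm hmn hp (by omega) (by omega) (by omega) (by omega)).le
        · rw [y2 l hlp hlp1]; exact hzl.le
    unfold completeTable
    split_ifs with c6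
    · exact fwdPD_eq_zero fun l hl hlm => hin l hl hlm (by omega)
    · have h2 := two_mul_lowbit_le hm c6
      refine _root_.fwdPD_eq (k := m - lowbit m) (by omega) (by omega) hbm ?_
        fun l hl hlm => hin l (by omega) hlm (by omega)
      have hodd : m - lowbit m ≠ p + 1 := by
        intro h3
        rw [h3] at h2
        omega
      rw [y2 m c1 c3, y2 _ (by omega) hodd]
      exact H.lt_sub_lowbit hm hmn c6

theorem IsCompleteHeap.fwdPD_swap_left {n p j : ℕ} {z : ℕ → ℤ} (H : IsCompleteHeap n z)
    (hp : 2 ≤ p) (hpn : p ≤ n) (he : p % 2 = 0) (hj : j ≤ padicValNat 2 p)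
    (hlt : ∀ i < j, z (p - 1) < z (p + 2 ^ i))
    (hgt : j = padicValNat 2 p ∨ z (p + 2 ^ j) < z (p - 1)) {m : ℕ} (hm : 1 ≤ m) (hmn : m ≤ n) :
    fwdPD (swapSeq z (p - 1)) m = leftTable p j m := by
  have hp1 : 1 ≤ p := by omega
  have hbp := lowbit_pos p
  have hbp' := lowbit_le hp1
  have hbe := lowbit_even hp1 he
  have hb1 : lowbit (p - 1) = 1 := lowbit_odd (by omega)
  have hbm := lowbit_pos m
  have hbm' := lowbit_le hm
  have hpp : z p < z (p - 1) :=
    H _ _ hp1 (by omega) (by omega) (by omega) (by omega) (by omega) (by omega)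
  have y0 : swapSeq z (p - 1) p = z (p - 1) := by
    simp [swapSeq, show p ≠ p - 1 by omega, show p - 1 + 1 = p by omega]
  have y1 : swapSeq z (p - 1) (p - 1) = z p := by simp [swapSeq, show p - 1 + 1 = p by omega]
  have y2 : ∀ l, l ≠ p → l ≠ p - 1 → swapSeq z (p - 1) l = z l := fun l h1 h2 => by
    simp [swapSeq, h1, h2, show p - 1 + 1 = p by omega]
  have hin : ∀ l, m ≠ p → m ≠ p - 1 → 1 ≤ l → l < m → m < l + lowbit m → l ≠ p → l ≠ p - 1 →
      swapSeq z (p - 1) m ≤ swapSeq z (p - 1) l := by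
    intro l c1 c2 hl hlm hml h3 h4
    rw [y2 m c1 c2, y2 l h3 h4]
    exact (H m l hm hmn hl (by omega) (by omega) hml (by omega)).le
  unfold leftTable
  split_ifs with c1 c2 c3
  · obtain rfl : m = p - 1 := by omega
    have hin : ∀ l, 1 ≤ l → l < p - 1 → p < l + lowbit p →
        swapSeq z (p - 1) (p - 1) ≤ swapSeq z (p - 1) l := by
      intro l hl hlm hml
      rw [y1, y2 l (by omega) (by omega)]
      exact (H p l hp1 hpn hl (by omega) (by omega) hml (by omega)).le
    unfold completeTable
    split_ifs with c6
    · exact fwdPD_eq_zero fun l hl hlm => hin l hl hlm (by omega)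
    · refine _root_.fwdPD_eq (k := p - lowbit p) (by omega) (by omega) (by omega) ?_
        fun l hl hlm => hin l (by omega) hlm (by omega)
      rw [y1, y2 _ (by omega) (by omega)]
      exact H.lt_sub_lowbit hp1 hpn c6
  · subst c2
    refine _root_.fwdPD_eq (k := m - 1) (by omega) (by omega) (by omega) ?_
      fun l hl hlm => absurd hlm (by omega)
    rwa [y0, y1]
  · have hlow := H.lt_sub_lowbit hm hmn (by omega)
    rw [show m - lowbit m = p by omega] at hlow
    have hmz : z m < z (p - 1) := by
      rcases hgt with hgt | hgt
      · have h2 := two_mul_lowbit_le hm (by omega)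
        rw [show m - lowbit m = p by omega] at h2
        have hbj : lowbit p = 2 ^ j := by rw [hgt, lowbit]
        omega
      · rcases eq_or_ne (p + 2 ^ j) m with e | e
        · rwa [← e]
        · have hjpos : 0 < 2 ^ j := by positivity
          exact (H m (p + 2 ^ j) hm hmn (by omega) (by omega) e (by omega) (by omega)).trans hgt
    refine _root_.fwdPD_eq (k := p - 1) (by omega) (by omega) (by omega) ?_ fun l hl hlm => ?_
    · rwa [y1, y2 m (by omega) (by omega)]
    · rcases eq_or_ne l p with rfl | hlp
      · rw [y0, y2 m (by omega) (by omega)]; exact hmz.le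
      · exact hin l (by omega) (by omega) (by omega) hlm (by omega) hlp (by omega)
  · unfold completeTable
    by_cases c4 : m = p + lowbit m
    · rw [if_neg (by omega)]
      have h2 := two_mul_lowbit_le hm (by omega)
      rw [show m - lowbit m = p by omega] at h2
      obtain ⟨i, hi⟩ : ∃ i, lowbit m = 2 ^ i := ⟨_, rfl⟩
      have hij : 2 ^ i < 2 ^ j := by omega
      rw [Nat.pow_lt_pow_iff_right (by norm_num)] at hij
      have h3 := hlt i hij
      rw [← hi, ← c4] at h3
      refine _root_.fwdPD_eq (k := p) (by omega) (by omega) (by omega) ?_ fun l hl hlm => ?_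
      · rwa [y0, y2 m (by omega) (by omega)]
      · exact hin l (by omega) (by omega) (by omega) hlm (by omega) (by omega) (by omega)
    · have hin' : ∀ l, 1 ≤ l → l < m → m < l + lowbit m →
          swapSeq z (p - 1) m ≤ swapSeq z (p - 1) l := by
        intro l hl hlm hml
        have hzl := H m l hm hmn hl (by omega) (by omega) hml (by omega)
        rcases eq_or_ne l p with rfl | hlp
        · rw [y0, y2 m (by omega) (by omega)]; exact (hzl.trans hpp).le
        · rcases eq_or_ne l (p - 1) with rfl | hlp1
          · rw [y1, y2 m (by omega) (by omega)]
            exact (H m p hm hmn hp1 (by omega) (by omega) (by omega) (by omega)).le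
          · exact hin l (by omega) (by omega) hl hlm hml hlp hlp1
      split_ifs with c6
      · exact fwdPD_eq_zero fun l hl hlm => hin' l hl hlm (by omega)
      · have h2 := two_mul_lowbit_le hm c6
        refine _root_.fwdPD_eq (k := m - lowbit m) (by omega) (by omega) hbm ?_
          fun l hl hlm => hin' l (by omega) hlm (by omega)
        have hodd : m - lowbit m ≠ p - 1 := by
          intro h3
          rw [h3] at h2
          omega
        rw [y2 m (by omega) (by omega), y2 _ (by omega) hodd]
        exact H.lt_sub_lowbit hm hmn c6

/-! ### Realising every threshold -/

theorem add_lowbit_le_add_lowbit {q m : ℕ} (hq : 0 < q) (hne : m ≠ q) (h1 : q < m + lowbit q)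
    (h2 : m < q + lowbit q) : m + lowbit m ≤ q + lowbit q ∧ q + lowbit m ≤ m + lowbit q := by
  rcases lt_or_gt_of_ne hne with hm | hm
  · have e := lowbit_sub hq (r := q - m) (by omega) (by omega)
    rw [show q - (q - m) = m by omega] at e
    have e1 : (q - m) + lowbit (q - m) ≤ lowbit q :=
      add_lowbit_le (by omega) (show q - m < lowbit q by omega)
    have := lowbit_le (m := q - m) (by omega)
    omega
  · have e := lowbit_add hq (r := m - q) (by omega) (by omega)
    rw [show q + (m - q) = m by omega] at e
    have e1 : (m - q) + lowbit (m - q) ≤ lowbit q :=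
      add_lowbit_le (by omega) (show m - q < lowbit q by omega)
    have := lowbit_le (m := m - q) (by omega)
    omega

theorem padicValNat_two_le {h m : ℕ} (hm : 1 ≤ m) (hmh : m < 2 ^ (h + 1)) :
    padicValNat 2 m ≤ h := by
  have h1 : 2 ^ padicValNat 2 m < 2 ^ (h + 1) := lt_of_le_of_lt (lowbit_le hm) hmh
  rw [Nat.pow_lt_pow_iff_right (by norm_num)] at h1
  omega

theorem compSeq_lt_compSeq {h m l : ℕ} (hm : 1 ≤ m) (hmh : m < 2 ^ (h + 1))
    (hlm : lowbit l < lowbit m) : compSeq h m < compSeq h l := by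
  have h1 := padicValNat_two_le hm hmh
  unfold lowbit at hlm
  rw [Nat.pow_lt_pow_iff_right (by norm_num)] at hlm
  obtain ⟨d, hd⟩ := Nat.exists_eq_add_of_lt
    (show h - padicValNat 2 m < h - padicValNat 2 l by omega)
  unfold compSeq
  rw [hd]
  have h2 : (0 : ℤ) ≤ (d : ℤ) * (2 ^ (h + 1) : ℕ) := by positivity
  push_cast at *
  have h3 : (m : ℤ) < 2 ^ (h + 1) := by exact_mod_cast hmh
  have h4 : (0 : ℤ) ≤ l := by positivity
  nlinarith

theorem compSeq_nonneg (h m : ℕ) : 0 ≤ compSeq h m := by unfold compSeq; positivity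

theorem compSeq_lt {h m : ℕ} (hmh : m < 2 ^ (h + 1)) :
    compSeq h m < (h + 1) * 2 ^ (h + 1) := by
  unfold compSeq
  have h1 : ((h - padicValNat 2 m : ℕ) : ℤ) ≤ h := by exact_mod_cast Nat.sub_le _ _
  have h3 : (m : ℤ) < 2 ^ (h + 1) := by exact_mod_cast hmh
  have h4 : (0 : ℤ) < 2 ^ (h + 1) := by positivity
  push_cast
  nlinarith

theorem compSeq_injOn (h : ℕ) : Set.InjOn (compSeq h) (Set.Icc 1 (2 ^ (h + 1) - 1)) := by
  intro a ha b hb hab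
  simp only [Set.mem_Icc] at ha hb
  rcases lt_trichotomy (lowbit a) (lowbit b) with hl | hl | hl
  · have := compSeq_lt_compSeq (h := h) hb.1 (by omega) hl
    omega
  · have hv : padicValNat 2 a = padicValNat 2 b := Nat.pow_right_injective le_rfl hl
    unfold compSeq at hab
    rw [hv] at hab
    simpa using hab
  · have := compSeq_lt_compSeq (h := h) ha.1 (by omega) hl
    omega

theorem isCompleteHeap_compSeq (h : ℕ) : IsCompleteHeap (2 ^ (h + 1) - 1) (compSeq h) := by
  intro m l hm hmn hl hln hne h1 h2
  exact compSeq_lt_compSeq hm (by omega) (lowbit_lt_of_mem hm hne h1 h2)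

/-- `compSeq` with the values on the subtree of `q` raised above all others. -/
def raisedSeq (h q : ℕ) : ℕ → ℤ := fun i =>
  compSeq h i + if q < i + lowbit q ∧ i < q + lowbit q then ((h : ℤ) + 1) * 2 ^ (h + 1) else 0

theorem raisedSeq_of_mem (h : ℕ) {q i : ℕ} (hi : q < i + lowbit q ∧ i < q + lowbit q) :
    raisedSeq h q i = compSeq h i + (h + 1) * 2 ^ (h + 1) := by
  unfold raisedSeq; rw [if_pos hi]

theorem raisedSeq_of_notMem (h : ℕ) {q i : ℕ} (hi : ¬ (q < i + lowbit q ∧ i < q + lowbit q)) :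
    raisedSeq h q i = compSeq h i := by
  unfold raisedSeq; rw [if_neg hi, add_zero]

theorem raisedSeq_lt (h : ℕ) {q a b : ℕ} (hah : a < 2 ^ (h + 1))
    (ha : ¬ (q < a + lowbit q ∧ a < q + lowbit q)) (hb : q < b + lowbit q ∧ b < q + lowbit q) :
    raisedSeq h q a < raisedSeq h q b := by
  rw [raisedSeq_of_notMem h ha, raisedSeq_of_mem h hb]
  have := compSeq_lt hah
  have := compSeq_nonneg h b
  linarith

theorem isSeq_raisedSeq (h q : ℕ) : IsSeq (2 ^ (h + 1) - 1) (raisedSeq h q) := by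
  intro a ha b hb hab
  by_cases h1 : q < a + lowbit q ∧ a < q + lowbit q <;>
  by_cases h2 : q < b + lowbit q ∧ b < q + lowbit q
  · rw [raisedSeq_of_mem h h1, raisedSeq_of_mem h h2] at hab
    exact compSeq_injOn h ha hb (by linarith)
  · simp only [Set.mem_Icc] at hb
    have := raisedSeq_lt h (by omega) h2 h1
    omega
  · simp only [Set.mem_Icc] at ha
    have := raisedSeq_lt h (by omega) h1 h2
    omega
  · rw [raisedSeq_of_notMem h h1, raisedSeq_of_notMem h h2] at hab
    exact compSeq_injOn h ha hb hab

theorem isCompleteHeap_raisedSeq (h : ℕ) {q : ℕ} (hq : 1 ≤ q) :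
    IsCompleteHeap (2 ^ (h + 1) - 1) (raisedSeq h q) := by
  intro m l hm hmn hl hln hne h1 h2
  have h3 := isCompleteHeap_compSeq h m l hm hmn hl hln hne h1 h2
  by_cases hmq : q < m + lowbit q ∧ m < q + lowbit q
  · have hlq : q < l + lowbit q ∧ l < q + lowbit q := by
      rcases eq_or_ne m q with rfl | hmq'
      · exact ⟨h1, h2⟩
      · have := add_lowbit_le_add_lowbit hq hmq' hmq.1 hmq.2
        omega
    rw [raisedSeq_of_mem h hmq, raisedSeq_of_mem h hlq]
    linarith
  · by_cases hlq : q < l + lowbit q ∧ l < q + lowbit q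
    · exact raisedSeq_lt h (by omega) hmq hlq
    · rwa [raisedSeq_of_notMem h hmq, raisedSeq_of_notMem h hlq]

theorem two_pow_lt_lowbit {p i : ℕ} (hi : i < padicValNat 2 p) : 2 ^ i < lowbit p :=
  Nat.pow_lt_pow_right (by norm_num) hi

theorem exists_right_threshold {h p j : ℕ} (hp : 1 ≤ p) (hpn : p + 1 ≤ 2 ^ (h + 1) - 1)
    (he : p % 2 = 0) (hj : j ≤ padicValNat 2 p) :
    ∃ z, IsSeq (2 ^ (h + 1) - 1) z ∧ IsCompleteHeap (2 ^ (h + 1) - 1) z ∧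
      (∀ i < j, z (p + 1) < z (p - 2 ^ i)) ∧
      (j = padicValNat 2 p ∨ z (p - 2 ^ j) < z (p + 1)) := by
  have hb1 : lowbit (p + 1) = 1 := lowbit_odd (by omega)
  have hbp := lowbit_le hp
  rcases j with _ | j
  · refine ⟨compSeq h, compSeq_injOn h, isCompleteHeap_compSeq h, by simp, Or.inr ?_⟩
    have e1 : padicValNat 2 (p + 1) = 0 := padicValNat.eq_zero_of_not_dvd (by omega)
    have e2 : padicValNat 2 (p - 1) = 0 := padicValNat.eq_zero_of_not_dvd (by omega)
    unfold compSeq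
    rw [pow_zero, e1, e2]
    have : ((p - 1 : ℕ) : ℤ) < ((p + 1 : ℕ) : ℤ) := by exact_mod_cast (by omega)
    linarith
  · have hjp := two_pow_lt_lowbit (show j < padicValNat 2 p by omega)
    have hb := lowbit_sub_two_pow hp (show j < padicValNat 2 p by omega)
    have hjpos : 0 < 2 ^ j := by positivity
    refine ⟨raisedSeq h (p - 2 ^ j), isSeq_raisedSeq h _, isCompleteHeap_raisedSeq h (by omega),
      fun i hi => ?_, ?_⟩
    · have hi1 : 2 ^ i ≤ 2 ^ j := Nat.pow_le_pow_right (by norm_num) (by omega)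
      have hi2 : 0 < 2 ^ i := by positivity
      exact raisedSeq_lt h (by omega) (by rw [hb]; omega) (by rw [hb]; omega)
    · rcases eq_or_lt_of_le hj with hj' | hj'
      · exact Or.inl hj'
      · right
        have h1 := two_pow_lt_lowbit hj'
        have h2 := lowbit_sub_two_pow hp hj'
        have h3 : 2 ^ (j + 1) = 2 * 2 ^ j := by ring
        rw [raisedSeq_of_notMem h (by rw [hb]; omega), raisedSeq_of_notMem h (by rw [hb]; omega)]
        exact compSeq_lt_compSeq (by omega) (by omega) (by omega)

theorem exists_left_threshold {h p j : ℕ} (hp : 2 ≤ p) (hpn : p ≤ 2 ^ (h + 1) - 1)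
    (he : p % 2 = 0) (hj : j ≤ padicValNat 2 p) :
    ∃ z, IsSeq (2 ^ (h + 1) - 1) z ∧ IsCompleteHeap (2 ^ (h + 1) - 1) z ∧
      (∀ i < j, z (p - 1) < z (p + 2 ^ i)) ∧
      (j = padicValNat 2 p ∨ z (p + 2 ^ j) < z (p - 1)) := by
  have hp1 : 1 ≤ p := by omega
  have hb1 : lowbit (p - 1) = 1 := lowbit_odd (by omega)
  have hbp := lowbit_le hp1
  have hbn : p + lowbit p ≤ 2 ^ (h + 1) := add_lowbit_le hp1 (by omega)
  have hbe := lowbit_even hp1 he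
  have hbpos := lowbit_pos p
  rcases j with _ | j
  · refine ⟨raisedSeq h (p - 1), isSeq_raisedSeq h _, isCompleteHeap_raisedSeq h (by omega),
      by simp, Or.inr ?_⟩
    rw [pow_zero]
    have : 0 < 2 ^ (h + 1) := by positivity
    have h2 : 2 ^ (h + 1) = 2 * 2 ^ h := by ring
    exact raisedSeq_lt h (by omega) (by rw [hb1]; omega) (by rw [hb1]; omega)
  · have hjp := two_pow_lt_lowbit (show j < padicValNat 2 p by omega)
    have hb := lowbit_add_two_pow hp1 (show j < padicValNat 2 p by omega)
    have hjpos : 0 < 2 ^ j := by positivity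
    refine ⟨raisedSeq h (p + 2 ^ j), isSeq_raisedSeq h _, isCompleteHeap_raisedSeq h (by omega),
      fun i hi => ?_, ?_⟩
    · have hi1 : 2 ^ i ≤ 2 ^ j := Nat.pow_le_pow_right (by norm_num) (by omega)
      have hi2 : 0 < 2 ^ i := by positivity
      exact raisedSeq_lt h (by omega) (by rw [hb]; omega) (by rw [hb]; omega)
    · rcases eq_or_lt_of_le hj with hj' | hj'
      · exact Or.inl hj'
      · right
        have h1 := two_pow_lt_lowbit hj'
        have h2 := lowbit_add_two_pow hp1 hj'
        have h3 : 2 ^ (j + 1) = 2 * 2 ^ j := by ring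
        rw [raisedSeq_of_notMem h (by rw [hb]; omega), raisedSeq_of_notMem h (by rw [hb]; omega)]
        exact compSeq_lt_compSeq (by omega) (by omega) (by omega)

/-! ### The neighborhood -/

theorem PDvec_eq_compSeq_iff {h : ℕ} {z : ℕ → ℤ} (hz : IsSeq (2 ^ (h + 1) - 1) z) :
    PDvec (2 ^ (h + 1) - 1) z = PDvec (2 ^ (h + 1) - 1) (compSeq h) ↔
      IsCompleteHeap (2 ^ (h + 1) - 1) z := by
  have hc := isCompleteHeap_compSeq h
  constructor
  · intro hPD
    refine isCompleteHeap_of_fwdPD hz fun m hm hmn => ?_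
    have h1 := congrFun hPD ⟨m - 1, by omega⟩
    simp only [PDvec, Nat.sub_add_cancel hm] at h1
    rw [h1, hc.fwdPD_eq hm hmn]
  · intro H
    funext ⟨k, hk⟩
    simp only [PDvec]
    rw [H.fwdPD_eq (by omega) (by omega), hc.fwdPD_eq (by omega) (by omega)]

theorem IsSeq.exists_right_threshold {n p : ℕ} {z : ℕ → ℤ} (hz : IsSeq n z)
    (hp : 1 ≤ p) (hpn : p + 1 ≤ n) : ∃ j ≤ padicValNat 2 p,
      (∀ i < j, z (p + 1) < z (p - 2 ^ i)) ∧
      (j = padicValNat 2 p ∨ z (p - 2 ^ j) < z (p + 1)) := by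
  classical
  have hex : ∃ j, j = padicValNat 2 p ∨ z (p - 2 ^ j) < z (p + 1) := ⟨_, Or.inl rfl⟩
  have hbp := lowbit_le hp
  refine ⟨Nat.find hex, Nat.find_min' hex (Or.inl rfl), fun i hi => ?_, Nat.find_spec hex⟩
  have h1 := Nat.find_min hex hi
  push Not at h1
  have h2 := two_pow_lt_lowbit (lt_of_lt_of_le hi (Nat.find_min' hex (Or.inl rfl)))
  have h3 : 0 < 2 ^ i := by positivity
  refine lt_of_le_of_ne h1.2 fun he => ?_
  have := hz ⟨by omega, hpn⟩ ⟨by omega, by omega⟩ he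
  omega

theorem IsSeq.exists_left_threshold {h p : ℕ} {z : ℕ → ℤ}
    (hz : IsSeq (2 ^ (h + 1) - 1) z) (hp : 2 ≤ p) (hpn : p ≤ 2 ^ (h + 1) - 1) :
    ∃ j ≤ padicValNat 2 p, (∀ i < j, z (p - 1) < z (p + 2 ^ i)) ∧
      (j = padicValNat 2 p ∨ z (p + 2 ^ j) < z (p - 1)) := by
  classical
  have hex : ∃ j, j = padicValNat 2 p ∨ z (p + 2 ^ j) < z (p - 1) := ⟨_, Or.inl rfl⟩
  have hbn : p + lowbit p ≤ 2 ^ (h + 1) := add_lowbit_le (by omega) (by omega)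
  refine ⟨Nat.find hex, Nat.find_min' hex (Or.inl rfl), fun i hi => ?_, Nat.find_spec hex⟩
  have h1 := Nat.find_min hex hi
  push Not at h1
  have h2 := two_pow_lt_lowbit (lt_of_lt_of_le hi (Nat.find_min' hex (Or.inl rfl)))
  have h3 : 0 < 2 ^ i := by positivity
  refine lt_of_le_of_ne h1.2 fun he => ?_
  have := hz ⟨by omega, by omega⟩ ⟨by omega, by omega⟩ he
  omega

/-- A function of positions, restricted to `1,…,n` and indexed by `Fin n`. -/
def toVec (n : ℕ) (f : ℕ → ℕ) : Fin n → ℕ := fun k => f (k.1 + 1)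

theorem toVec_eq_iff {n : ℕ} {f g : ℕ → ℕ} :
    toVec n f = toVec n g ↔ ∀ m, 1 ≤ m → m ≤ n → f m = g m := by
  constructor
  · intro hfg m hm hmn
    have h1 := congrFun hfg ⟨m - 1, by omega⟩
    simpa only [toVec, Nat.sub_add_cancel hm] using h1
  · intro hfg
    funext ⟨k, hk⟩
    exact hfg _ (by omega) (by omega)

/-- Codes `(q, j)` for an internal node `2 * q` and a threshold `j`. -/
def thresholdCodes (h : ℕ) : Finset (Σ _ : ℕ, ℕ) :=
  (Finset.Ico 1 (2 ^ h)).sigma fun q => Finset.range (padicValNat 2 (2 * q) + 1)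

theorem NG_compSeq (h : ℕ) : NG (2 ^ (h + 1) - 1) (compSeq h) =
    (fun s : Σ _ : ℕ, ℕ => toVec (2 ^ (h + 1) - 1) (rightTable (2 * s.1) s.2)) ''
        (thresholdCodes h) ∪
      (fun s : Σ _ : ℕ, ℕ => toVec (2 ^ (h + 1) - 1) (leftTable (2 * s.1) s.2)) ''
        (thresholdCodes h) := by
  have h2 : 2 ^ (h + 1) = 2 * 2 ^ h := by ring
  ext P
  simp only [NG, NGat, Set.mem_iUnion, Set.mem_ofPred_eq, Set.mem_union, Set.mem_image,
    SetLike.mem_coe, thresholdCodes, Finset.mem_sigma, Finset.mem_Ico, Finset.mem_range]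
  constructor
  · rintro ⟨i, hi, hin, z, hz, hPD, rfl⟩
    rw [PDvec_eq_compSeq_iff hz] at hPD
    rcases Nat.mod_two_eq_zero_or_one i with he | he
    · left
      obtain ⟨j, hj, hlt, hgt⟩ := IsSeq.exists_right_threshold hz hi hin
      refine ⟨⟨i / 2, j⟩, ?_, ?_⟩
      · dsimp only
        rw [show 2 * (i / 2) = i by omega]
        omega
      · dsimp only
        rw [show 2 * (i / 2) = i by omega]
        refine toVec_eq_iff.2 fun m hm hmn => ?_
        exact (hPD.fwdPD_swap_right hi hin he hj hlt hgt hm hmn).symm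
    · right
      obtain ⟨j, hj, hlt, hgt⟩ :=
        IsSeq.exists_left_threshold (p := i + 1) hz (by omega) hin
      refine ⟨⟨(i + 1) / 2, j⟩, ?_, ?_⟩
      · dsimp only
        rw [show 2 * ((i + 1) / 2) = i + 1 by omega]
        omega
      · dsimp only
        rw [show 2 * ((i + 1) / 2) = i + 1 by omega]
        refine toVec_eq_iff.2 fun m hm hmn => ?_
        exact (hPD.fwdPD_swap_left (by omega) hin (by omega) hj hlt hgt hm hmn).symm
  · rintro (⟨⟨q, j⟩, ⟨hq, hj⟩, rfl⟩ | ⟨⟨q, j⟩, ⟨hq, hj⟩, rfl⟩)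
    · dsimp only at hq hj ⊢
      obtain ⟨z, hz, H, hlt, hgt⟩ := exists_right_threshold (h := h) (p := 2 * q) (j := j)
        (by omega) (by omega) (by omega) (by omega)
      refine ⟨2 * q, by omega, by omega, z, hz, (PDvec_eq_compSeq_iff hz).2 H, ?_⟩
      refine toVec_eq_iff.2 fun m hm hmn => ?_
      exact (H.fwdPD_swap_right (by omega) (by omega) (by omega) (by omega) hlt hgt hm hmn).symm
    · dsimp only at hq hj ⊢
      obtain ⟨z, hz, H, hlt, hgt⟩ := exists_left_threshold (h := h) (p := 2 * q) (j := j)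
        (by omega) (by omega) (by omega) (by omega)
      refine ⟨2 * q - 1, by omega, by omega, z, hz, (PDvec_eq_compSeq_iff hz).2 H, ?_⟩
      refine toVec_eq_iff.2 fun m hm hmn => ?_
      exact (H.fwdPD_swap_left (by omega) (by omega) (by omega) (by omega) hlt hgt hm hmn).symm

/-! ### Counting -/

theorem completeTable_odd {m : ℕ} (hm : m % 2 = 1) (hm1 : m ≠ 1) : completeTable m = 1 := by
  rw [completeTable, lowbit_odd hm, if_neg hm1]

theorem completeTable_even_ne_one {m : ℕ} (hm : 0 < m) (he : m % 2 = 0) :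
    completeTable m ≠ 1 := by
  have := lowbit_even hm he
  unfold completeTable
  split_ifs <;> omega

theorem rightTable_injective {n p j q i : ℕ} (hp : 1 ≤ p) (hpn : p + 1 ≤ n) (hpe : p % 2 = 0)
    (hqe : q % 2 = 0)
    (heq : ∀ m, 1 ≤ m → m ≤ n → rightTable p j m = rightTable q i m) : p = q ∧ j = i := by
  have hbe := lowbit_even hp hpe
  have hbp := lowbit_pos p
  have hb1 : lowbit (p + 1) = 1 := lowbit_odd (by omega)
  have hpq : p = q := by
    by_contra hne
    have h1 := heq (p + 1) (by omega) hpn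
    have h2 := completeTable_odd (m := p + 1) (by omega) (by omega)
    simp only [rightTable] at h1
    rw [h2, hb1] at h1
    split_ifs at h1 <;> omega
  subst hpq
  have h1 := heq p hp (by omega)
  simp only [rightTable, if_true] at h1
  have h3 : 0 < 2 ^ i := by positivity
  have h4 : 0 < 2 ^ j := by positivity
  refine ⟨rfl, Nat.pow_right_injective le_rfl (?_ : 2 ^ j = 2 ^ i)⟩
  split_ifs at h1 <;> omega

theorem leftTable_injective {h p j q i : ℕ} (hp : 2 ≤ p) (hpn : p < 2 ^ (h + 1))
    (hpe : p % 2 = 0) (hqe : q % 2 = 0) (hj : j ≤ padicValNat 2 p) (hi : i ≤ padicValNat 2 q)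
    (heq : ∀ m, 1 ≤ m → m ≤ 2 ^ (h + 1) - 1 → leftTable p j m = leftTable q i m) :
    p = q ∧ j = i := by
  have hp1 : 1 ≤ p := by omega
  have hbe := lowbit_even hp1 hpe
  have hbp := lowbit_pos p
  have hbn : p + lowbit p ≤ 2 ^ (h + 1) := add_lowbit_le hp1 hpn
  have hpq : p = q := by
    by_contra hne
    have h1 := heq p hp1 (by omega)
    have h2 := completeTable_even_ne_one hp1 hpe
    simp only [leftTable] at h1
    split_ifs at h1 <;> omega
  subst hpq
  have aux : ∀ a b, a < b → b ≤ padicValNat 2 p → leftTable p a (p + 2 ^ a) ≠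
      leftTable p b (p + 2 ^ a) ∧ p + 2 ^ a ≤ 2 ^ (h + 1) - 1 := by
    intro a b hab hb
    have h1 := two_pow_lt_lowbit (lt_of_lt_of_le hab hb)
    have h2 := lowbit_add_two_pow hp1 (lt_of_lt_of_le hab hb)
    have h3 : 0 < 2 ^ a := by positivity
    have h4 : 2 ^ a < 2 ^ b := Nat.pow_lt_pow_right (by norm_num) hab
    refine ⟨?_, by omega⟩
    simp only [leftTable, completeTable, h2, true_and]
    split_ifs <;> omega
  refine ⟨rfl, ?_⟩
  rcases lt_trichotomy j i with hl | hl | hl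
  · obtain ⟨h1, h2⟩ := aux j i hl hi
    exact absurd (heq _ (Nat.le_add_right_of_le hp1) h2) h1
  · exact hl
  · obtain ⟨h1, h2⟩ := aux i j hl hj
    exact absurd (heq _ (Nat.le_add_right_of_le hp1) h2).symm h1

theorem rightTable_ne_leftTable {n p j q i : ℕ} (hp : 2 ≤ p) (hpn : p + 1 ≤ n) (hpe : p % 2 = 0)
    (hq : 2 ≤ q) (hqn : q ≤ n) (hqe : q % 2 = 0) :
    ¬ ∀ m, 1 ≤ m → m ≤ n → rightTable p j m = leftTable q i m := by
  intro heq
  have hbe := lowbit_even (show 0 < p by omega) hpe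
  have hbp := lowbit_pos p
  have hbq := lowbit_even (show 0 < q by omega) hqe
  have hbq' := lowbit_pos q
  have hb1 : lowbit (p + 1) = 1 := lowbit_odd (by omega)
  have hqp : q = p + 2 := by
    have h1 := heq (p + 1) (by omega) hpn
    have h2 := completeTable_odd (m := p + 1) (by omega) (by omega)
    simp only [rightTable, leftTable] at h1
    rw [h2, hb1] at h1
    split_ifs at h1 <;> omega
  subst hqp
  have h1 := heq (p + 2) (by omega) hqn
  have h2 := completeTable_even_ne_one (m := p + 2) (by omega) hqe
  have h3 := heq (p + 1) (by omega) hpn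
  simp only [rightTable, leftTable, completeTable] at h1 h2 h3
  split_ifs at h1 h2 h3 <;> omega

theorem sum_padicValNat_two (h : ℕ) :
    ∑ q ∈ Finset.Ico 1 (2 ^ h), padicValNat 2 q + h + 1 = 2 ^ h := by
  induction h with
  | zero => simp
  | succ h ih =>
    have hpos : 0 < 2 ^ h := by positivity
    have h2 : 2 ^ (h + 1) = 2 ^ h + 2 ^ h := by ring
    have e : ∑ q ∈ Finset.Ico (2 ^ h + 1) (2 ^ (h + 1)), padicValNat 2 q =
        ∑ q ∈ Finset.Ico 1 (2 ^ h), padicValNat 2 q := by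
      rw [h2, add_comm (2 ^ h) 1, ← Finset.sum_Ico_add]
      refine Finset.sum_congr rfl fun r hr => ?_
      rw [Finset.mem_Ico] at hr
      have := lowbit_add hpos (r := r) (by omega) (by rw [lowbit_two_pow]; omega)
      exact Nat.pow_right_injective le_rfl this
    rw [← Finset.sum_Ico_consecutive _ (show 1 ≤ 2 ^ h by omega)
      (show 2 ^ h ≤ 2 ^ (h + 1) by omega),
      Finset.sum_eq_sum_Ico_succ_bot (show 2 ^ h < 2 ^ (h + 1) by omega), e,
      padicValNat.prime_pow]
    omega

theorem card_thresholdCodes (h : ℕ) : (thresholdCodes h).card + h + 3 = 3 * 2 ^ h := by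
  have e : (thresholdCodes h).card = ∑ q ∈ Finset.Ico 1 (2 ^ h), (padicValNat 2 q + 2) := by
    rw [thresholdCodes, Finset.card_sigma]
    refine Finset.sum_congr rfl fun q hq => ?_
    rw [Finset.mem_Ico] at hq
    rw [Finset.card_range, padicValNat.mul (by norm_num) (by omega), padicValNat_self]
    ring
  have h1 := sum_padicValNat_two h
  have hpos : 0 < 2 ^ h := by positivity
  rw [e, Finset.sum_add_distrib, Finset.sum_const, Nat.card_Ico, smul_eq_mul]
  omega

theorem stmt15 (h : ℕ) (hh : 1 ≤ h) :
    (NG (2 ^ (h + 1) - 1) (compSeq h)).ncard = 6 * (2 ^ h - 1) - 2 * h := by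
  have h2 : 2 ^ (h + 1) = 2 * 2 ^ h := by ring
  have hmem : ∀ s ∈ (thresholdCodes h : Set (Σ _ : ℕ, ℕ)),
      (1 ≤ s.1 ∧ s.1 < 2 ^ h) ∧ s.2 ≤ padicValNat 2 (2 * s.1) := by
    intro s hs
    simpa [thresholdCodes, Nat.lt_succ_iff] using hs
  have hR : Set.InjOn
      (fun s : Σ _ : ℕ, ℕ => toVec (2 ^ (h + 1) - 1) (rightTable (2 * s.1) s.2))
      (thresholdCodes h) := by
    rintro ⟨q, j⟩ hs ⟨q', j'⟩ hs' heq
    have h3 := hmem _ hs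
    have h4 := hmem _ hs'
    dsimp only at h3 h4
    obtain ⟨h5, rfl⟩ := rightTable_injective (p := 2 * q) (q := 2 * q') (by omega) (by omega)
      (by omega) (by omega) (toVec_eq_iff.1 heq)
    obtain rfl : q = q' := by omega
    rfl
  have hL : Set.InjOn
      (fun s : Σ _ : ℕ, ℕ => toVec (2 ^ (h + 1) - 1) (leftTable (2 * s.1) s.2))
      (thresholdCodes h) := by
    rintro ⟨q, j⟩ hs ⟨q', j'⟩ hs' heq
    have h3 := hmem _ hs
    have h4 := hmem _ hs'
    dsimp only at h3 h4
    obtain ⟨h5, rfl⟩ := leftTable_injective (p := 2 * q) (q := 2 * q') (by omega) (by omega)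
      (by omega) (by omega) h3.2 h4.2 (toVec_eq_iff.1 heq)
    obtain rfl : q = q' := by omega
    rfl
  rw [NG_compSeq, Set.ncard_union_eq, hR.ncard_image, hL.ncard_image,
    Set.ncard_coe_finset]
  · have := card_thresholdCodes h
    omega
  · rw [Set.disjoint_left]
    rintro _ ⟨⟨q, j⟩, hs, rfl⟩ ⟨⟨q', j'⟩, hs', heq⟩
    have h3 := hmem _ hs
    have h4 := hmem _ hs'
    dsimp only at h3 h4
    exact rightTable_ne_leftTable (p := 2 * q) (q := 2 * q') (by omega) (by omega) (by omega)
      (by omega) (by omega) (by omega) (toVec_eq_iff.1 heq.symm)
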